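/- Let K be a field of characteristic 0, A a finite-dimensional ℤ₂-graded associative unital K-algebra, B a ℤ₂-graded associative unital K-algebra, and (Ξ, ρ) an A-universal supermap for B. Assume B is formally smooth in the following sense: for every ℤ₂-graded associative unital K-algebra U and every ℤ₂-graded nilpotent two-sided ideal N of U, every graded K-algebra homomorphism B → U/N lifts to a graded K-algebra homomorphism B → U. Then Ξ is formally smooth as a supercommutative algebra: for every supercommutative K-algebra C and every ℤ₂-graded nilpotent ideal N of C, every graded K-algebra homomorphism γ: Ξ → C/N lifts to a graded K-algebra homomorphism Ξ → C (i.e. there exists a graded homomorphism η: Ξ → C with π_N∘η = γ, where π_N: C → C/N is the projection). -/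

import Mathlib

open TensorProduct

universe u

section SuperDefs

variable (K : Type u) [Field K]

/-- A ℤ₂-decomposition of a `K`-module. -/
def IsZ2Decomp {A : Type*} [AddCommGroup A] [Module K A]
    (𝒜 : ZMod 2 → Submodule K A) : Prop :=
  𝒜 0 ⊔ 𝒜 1 = ⊤ ∧ 𝒜 0 ⊓ 𝒜 1 = ⊥

/-- A ℤ₂-grading on a `K`-algebra. -/
def IsZ2Grading {A : Type*} [Ring A] [Algebra K A]
    (𝒜 : ZMod 2 → Submodule K A) : Prop :=
  IsZ2Decomp K 𝒜 ∧ (1 : A) ∈ 𝒜 0 ∧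
    ∀ i j : ZMod 2, ∀ a ∈ 𝒜 i, ∀ b ∈ 𝒜 j, a * b ∈ 𝒜 (i + j)

/-- Homogeneous elements supercommute. -/
def IsSupercommutative {A : Type*} [Ring A] [Algebra K A]
    (𝒜 : ZMod 2 → Submodule K A) : Prop :=
  ∀ i j : ZMod 2, ∀ a ∈ 𝒜 i, ∀ b ∈ 𝒜 j,
    a * b = (-1 : K) ^ (i.val * j.val) • (b * a)

/-- The super (ℤ₂-) grading on a tensor product. -/
def superTensorGrading {A Ξ : Type*} [AddCommGroup A] [Module K A]
    [AddCommGroup Ξ] [Module K Ξ]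
    (𝒜 : ZMod 2 → Submodule K A) (𝒳 : ZMod 2 → Submodule K Ξ)
    (k : ZMod 2) : Submodule K (A ⊗[K] Ξ) :=
  LinearMap.range (TensorProduct.map (𝒜 0).subtype (𝒳 k).subtype) ⊔
    LinearMap.range (TensorProduct.map (𝒜 1).subtype (𝒳 (k + 1)).subtype)

/-- A graded homomorphism of ℤ₂-graded algebras. -/
def IsGradedHom {B C : Type*} [Ring B] [Algebra K B] [Ring C] [Algebra K C]
    (ℬ : ZMod 2 → Submodule K B) (𝒞 : ZMod 2 → Submodule K C)
    (f : B →ₐ[K] C) : Prop :=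
  ∀ k : ZMod 2, ∀ b ∈ ℬ k, f b ∈ 𝒞 k

/-- A graded (homogeneous) subspace. -/
def IsGradedSubmodule {A : Type*} [AddCommGroup A] [Module K A]
    (𝒜 : ZMod 2 → Submodule K A) (W : Submodule K A) : Prop :=
  W = (W ⊓ 𝒜 0) ⊔ (W ⊓ 𝒜 1)

/-- A graded (homogeneous) subalgebra. -/
def IsGradedSubalgebra {A : Type*} [Ring A] [Algebra K A]
    (𝒜 : ZMod 2 → Submodule K A) (S : Subalgebra K A) : Prop :=
  IsGradedSubmodule K 𝒜 (Subalgebra.toSubmodule S)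

/-- A `K`-subspace which is a two-sided ideal. -/
def IsTwoSidedSubmodule {A : Type*} [Ring A] [Algebra K A]
    (I : Submodule K A) : Prop :=
  ∀ a : A, ∀ x ∈ I, a * x ∈ I ∧ x * a ∈ I

/-- Graded-simplicity: no nonzero proper graded two-sided ideals. -/
def IsGradedSimple {A : Type*} [Ring A] [Algebra K A]
    (𝒜 : ZMod 2 → Submodule K A) : Prop :=
  ∀ I : Submodule K A, IsTwoSidedSubmodule K I → IsGradedSubmodule K 𝒜 I →
    I = ⊥ ∨ I = ⊤

/-- A supercommutative `K`-algebra (algebra of superscalars). -/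
structure SuperAlg : Type (u + 1) where
  carrier : Type u
  [ring : Ring carrier]
  [alg : Algebra K carrier]
  grading : ZMod 2 → Submodule K carrier
  isGrading : IsZ2Grading K grading
  isSupercomm : IsSupercommutative K grading

attribute [instance] SuperAlg.ring SuperAlg.alg

/-- `ρ(B) ⊆ A ⊗ S` for a subalgebra `S` of `Ξ`. -/
def MapsIntoTensorSub {A B Ξ : Type u} [Ring A] [Algebra K A] [Ring B] [Algebra K B]
    [Ring Ξ] [Algebra K Ξ] (ρ : B →ₐ[K] A ⊗[K] Ξ) (S : Subalgebra K Ξ) : Prop :=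
  ∀ b : B, ρ b ∈ LinearMap.range
    (TensorProduct.map (LinearMap.id : A →ₗ[K] A) (Subalgebra.toSubmodule S).subtype)

/-- `(Ξ, ρ)` is an `A`-universal supermap for `B`. -/
def IsUniversalSupermap {A : Type u} [Ring A] [Algebra K A]
    (𝒜 : ZMod 2 → Submodule K A)
    {B : Type u} [Ring B] [Algebra K B] (ℬ : ZMod 2 → Submodule K B)
    (Ξ : SuperAlg K) (ρ : B →ₐ[K] A ⊗[K] Ξ.carrier) : Prop :=
  IsGradedHom K ℬ (superTensorGrading K 𝒜 Ξ.grading) ρ ∧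
  (∀ S : Subalgebra K Ξ.carrier, IsGradedSubalgebra K Ξ.grading S →
      MapsIntoTensorSub K ρ S → S = ⊤) ∧
  ∀ (F : SuperAlg K) (κ : B →ₐ[K] A ⊗[K] F.carrier),
    IsGradedHom K ℬ (superTensorGrading K 𝒜 F.grading) κ →
    ∃ ζ : Ξ.carrier →ₐ[K] F.carrier, IsGradedHom K Ξ.grading F.grading ζ ∧
      (Algebra.TensorProduct.map (AlgHom.id K A) ζ).comp ρ = κ

end SuperDefs

section QuotDefs

variable (K : Type u) [Field K]

/-- The relation identifying elements modulo the two-sided ideal `I`. -/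
def idealRel {B : Type u} [Ring B] [Algebra K B] (I : Submodule K B) :
    B → B → Prop :=
  fun a b => a - b ∈ I

/-- The induced ℤ₂-grading on the quotient `B ⧸ I` (realized as `RingQuot`). -/
noncomputable def quotGrading {B : Type u} [Ring B] [Algebra K B]
    (ℬ : ZMod 2 → Submodule K B) (I : Submodule K B) :
    ZMod 2 → Submodule K (RingQuot (idealRel K I)) :=
  fun k => (ℬ k).map (RingQuot.mkAlgHom K (idealRel K I)).toLinearMap

/-- A nilpotent ideal: all products of `s` elements of `N` vanish, for some `s ≥ 1`. -/
def IsNilpotentSubmodule {B : Type u} [Ring B] [Algebra K B]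
    (N : Submodule K B) : Prop :=
  ∃ s : ℕ, 0 < s ∧ ∀ x : Fin s → B, (∀ i, x i ∈ N) → (List.ofFn x).prod = 0

end QuotDefs

/-!
Write `π : C → C ⧸ N` for the projection. Tensoring it with `A` gives a surjective graded
homomorphism `A ⊗ C → A ⊗ (C ⧸ N)` whose kernel `A ⊗ N` is again nilpotent, so formal smoothness
of `B` lifts `(id ⊗ γ) ∘ ρ` to a graded homomorphism `B → A ⊗ C`. By universality this lift is
`(id ⊗ η) ∘ ρ` for some `η : Ξ → C`. Now `π ∘ η` and `γ` agree after composing `id ⊗ -` with `ρ`;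
as `A` is flat over `K`, this says that `ρ` takes values in `A ⊗ E`, where `E` is the equalizer of
`π ∘ η` and `γ`. Since `E` is a graded subalgebra, minimality of `Ξ` forces `E = Ξ`.
-/

section Decomposition

variable {K : Type u} [Field K]
variable {V W : Type*} [AddCommGroup V] [Module K V] [AddCommGroup W] [Module K W]
variable {𝒱 : ZMod 2 → Submodule K V} {𝒲 : ZMod 2 → Submodule K W}

theorem zmod_two_eq_zero_or_eq_one (i : ZMod 2) : i = 0 ∨ i = 1 := by
  decide +revert

namespace IsZ2Decomp

theorem isCompl (h : IsZ2Decomp K 𝒱) : IsCompl (𝒱 0) (𝒱 1) :=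
  ⟨disjoint_iff.2 h.2, codisjoint_iff.2 h.1⟩

theorem exists_add_eq (h : IsZ2Decomp K 𝒱) (v : V) : ∃ v₀ ∈ 𝒱 0, ∃ v₁ ∈ 𝒱 1, v₀ + v₁ = v :=
  Submodule.mem_sup.1 (h.1 ▸ Submodule.mem_top)

theorem eq_zero_of_mem_of_mem (h : IsZ2Decomp K 𝒱) {v : V} (h₀ : v ∈ 𝒱 0) (h₁ : v ∈ 𝒱 1) :
    v = 0 :=
  Submodule.disjoint_def.1 h.isCompl.disjoint v h₀ h₁

theorem isGradedSubmodule_ker (h𝒱 : IsZ2Decomp K 𝒱) (h𝒲 : IsZ2Decomp K 𝒲) {f : V →ₗ[K] W}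
    (hf : ∀ k, ∀ v ∈ 𝒱 k, f v ∈ 𝒲 k) : IsGradedSubmodule K 𝒱 (LinearMap.ker f) := by
  refine le_antisymm (fun v hv => ?_) (sup_le inf_le_left inf_le_left)
  obtain ⟨v₀, hv₀, v₁, hv₁, rfl⟩ := h𝒱.exists_add_eq v
  have hsum : f v₀ + f v₁ = 0 := by rw [← map_add]; exact hv
  have hfv₀ : f v₀ = 0 := h𝒲.eq_zero_of_mem_of_mem (hf 0 v₀ hv₀)
    (eq_neg_of_add_eq_zero_left hsum ▸ neg_mem (hf 1 v₁ hv₁))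
  have hfv₁ : f v₁ = 0 := by rwa [hfv₀, zero_add] at hsum
  exact Submodule.add_mem_sup ⟨hfv₀, hv₀⟩ ⟨hfv₁, hv₁⟩

theorem map (h : IsZ2Decomp K 𝒱) {f : V →ₗ[K] W} (hf : Function.Surjective f)
    (hker : IsGradedSubmodule K 𝒱 (LinearMap.ker f)) :
    IsZ2Decomp K fun k => (𝒱 k).map f := by
  refine ⟨by rw [← Submodule.map_sup, h.1, Submodule.map_top, LinearMap.range_eq_top.2 hf], ?_⟩
  rw [eq_bot_iff]
  rintro _ ⟨⟨v₀, hv₀, rfl⟩, ⟨v₁, hv₁, hv⟩⟩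
  have hsub : v₀ - v₁ ∈ LinearMap.ker f := by rw [LinearMap.mem_ker, map_sub, hv, sub_self]
  rw [hker] at hsub
  obtain ⟨n₀, hn₀, n₁, hn₁, hn⟩ := Submodule.mem_sup.1 hsub
  have heq : v₀ - n₀ = v₁ + n₁ := by
    rw [sub_eq_iff_eq_add, add_assoc, add_comm n₁, hn, add_sub_cancel]
  have hzero : v₀ - n₀ = 0 := h.eq_zero_of_mem_of_mem (sub_mem hv₀ hn₀.2)
    (heq ▸ add_mem hv₁ hn₁.2)
  rw [sub_eq_zero.1 hzero]
  exact hn₀.1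

theorem exists_map_eq_of_surjective (h𝒱 : IsZ2Decomp K 𝒱) (h𝒲 : IsZ2Decomp K 𝒲) {f : V →ₗ[K] W}
    (hf : ∀ k, ∀ v ∈ 𝒱 k, f v ∈ 𝒲 k) (hsurj : Function.Surjective f) {k : ZMod 2} {w : W}
    (hw : w ∈ 𝒲 k) : ∃ v ∈ 𝒱 k, f v = w := by
  obtain ⟨v, rfl⟩ := hsurj w
  obtain ⟨v₀, hv₀, v₁, hv₁, rfl⟩ := h𝒱.exists_add_eq v
  rw [map_add] at hw ⊢
  obtain rfl | rfl := zmod_two_eq_zero_or_eq_one k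
  · refine ⟨v₀, hv₀, ?_⟩
    rw [h𝒲.eq_zero_of_mem_of_mem ((add_mem_cancel_left (hf 0 v₀ hv₀)).1 hw) (hf 1 v₁ hv₁),
      add_zero]
  · refine ⟨v₁, hv₁, ?_⟩
    rw [h𝒲.eq_zero_of_mem_of_mem (hf 0 v₀ hv₀) ((add_mem_cancel_right (hf 1 v₁ hv₁)).1 hw),
      zero_add]

/-- The projection of a ℤ₂-graded module onto its component of degree `i`, along the other one. -/
noncomputable def proj (h : IsZ2Decomp K 𝒱) (i : ZMod 2) : V →ₗ[K] V :=
  if i = 0 then (𝒱 0).projection (𝒱 1) h.isCompl else (𝒱 1).projection (𝒱 0) h.isCompl.symm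

theorem proj_apply_of_mem (h : IsZ2Decomp K 𝒱) (i : ZMod 2) {j : ZMod 2} {v : V}
    (hv : v ∈ 𝒱 j) : h.proj i v = if i = j then v else 0 := by
  obtain rfl | rfl := zmod_two_eq_zero_or_eq_one i <;>
    obtain rfl | rfl := zmod_two_eq_zero_or_eq_one j <;>
    simp [proj, Submodule.projection_apply_of_mem_left, Submodule.projection_apply_of_mem_right, hv]

end IsZ2Decomp

theorem tmul_mem_superTensorGrading {i j k : ZMod 2} (hij : i + j = k) {v : V} {w : W}
    (hv : v ∈ 𝒱 i) (hw : w ∈ 𝒲 j) : v ⊗ₜ[K] w ∈ superTensorGrading K 𝒱 𝒲 k := by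
  subst hij
  obtain rfl | rfl := zmod_two_eq_zero_or_eq_one i
  · rw [zero_add]
    refine Submodule.mem_sup_left ?_
    exact ⟨⟨v, hv⟩ ⊗ₜ ⟨w, hw⟩, rfl⟩
  · refine Submodule.mem_sup_right ?_
    rw [show 1 + j + 1 = j by rw [add_right_comm, CharTwo.add_self_eq_zero, zero_add]]
    exact ⟨⟨v, hv⟩ ⊗ₜ ⟨w, hw⟩, rfl⟩

theorem superTensorGrading_le {k : ZMod 2} {P : Submodule K (V ⊗[K] W)}
    (h : ∀ i j, i + j = k → ∀ v ∈ 𝒱 i, ∀ w ∈ 𝒲 j, v ⊗ₜ[K] w ∈ P) :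
    superTensorGrading K 𝒱 𝒲 k ≤ P := by
  simp only [superTensorGrading, TensorProduct.range_map_eq_span_tmul, sup_le_iff,
    Submodule.span_le]
  constructor
  · rintro _ ⟨v, w, rfl⟩
    exact h 0 k (zero_add k) v v.2 w w.2
  · rintro _ ⟨v, w, rfl⟩
    exact h 1 (k + 1) (by rw [add_left_comm, CharTwo.add_self_eq_zero, add_zero]) v v.2 w w.2

/-- The projection of `V ⊗ W` onto its component of degree `k` in the super grading. -/
noncomputable def IsZ2Decomp.tensorProj (h𝒱 : IsZ2Decomp K 𝒱) (h𝒲 : IsZ2Decomp K 𝒲)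
    (k : ZMod 2) : V ⊗[K] W →ₗ[K] V ⊗[K] W :=
  ∑ i, TensorProduct.map (h𝒱.proj i) (h𝒲.proj (k - i))

theorem IsZ2Decomp.tensorProj_apply_of_mem (h𝒱 : IsZ2Decomp K 𝒱) (h𝒲 : IsZ2Decomp K 𝒲)
    (k : ZMod 2) {l : ZMod 2} {t : V ⊗[K] W} (ht : t ∈ superTensorGrading K 𝒱 𝒲 l) :
    h𝒱.tensorProj h𝒲 k t = if k = l then t else 0 := by
  suffices h : superTensorGrading K 𝒱 𝒲 l ≤
      LinearMap.eqLocus (h𝒱.tensorProj h𝒲 k) (if k = l then LinearMap.id else 0) by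
    have ht' := h ht
    split_ifs at ht' ⊢ <;> exact ht'
  refine superTensorGrading_le fun i j hij v hv w hw => ?_
  subst hij
  by_cases hk : k = i + j
  · simp [tensorProj, h𝒱.proj_apply_of_mem _ hv, h𝒲.proj_apply_of_mem _ hw, hk, ite_tmul]
  · have hk' : k - i ≠ j := fun h => hk (by rw [← h, add_sub_cancel])
    simp [tensorProj, h𝒱.proj_apply_of_mem _ hv, h𝒲.proj_apply_of_mem _ hw, hk, hk', ite_tmul]

theorem IsZ2Decomp.tensorProduct (h𝒱 : IsZ2Decomp K 𝒱) (h𝒲 : IsZ2Decomp K 𝒲) :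
    IsZ2Decomp K (superTensorGrading K 𝒱 𝒲) := by
  constructor
  · rw [eq_top_iff, ← TensorProduct.span_tmul_eq_top, Submodule.span_le]
    rintro _ ⟨v, w, rfl⟩
    obtain ⟨v₀, hv₀, v₁, hv₁, rfl⟩ := h𝒱.exists_add_eq v
    obtain ⟨w₀, hw₀, w₁, hw₁, rfl⟩ := h𝒲.exists_add_eq w
    rw [TensorProduct.add_tmul, TensorProduct.tmul_add, TensorProduct.tmul_add]
    exact add_mem
      (Submodule.add_mem_sup (tmul_mem_superTensorGrading (add_zero 0) hv₀ hw₀)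
        (tmul_mem_superTensorGrading (zero_add 1) hv₀ hw₁))
      (add_mem (Submodule.mem_sup_right (tmul_mem_superTensorGrading (add_zero 1) hv₁ hw₀))
        (Submodule.mem_sup_left
          (tmul_mem_superTensorGrading (CharTwo.add_self_eq_zero 1) hv₁ hw₁)))
  · rw [eq_bot_iff]
    rintro t ⟨ht₀, ht₁⟩
    have hproj₀ := h𝒱.tensorProj_apply_of_mem h𝒲 0 ht₀
    have hproj₁ := h𝒱.tensorProj_apply_of_mem h𝒲 0 ht₁
    rw [if_pos rfl] at hproj₀
    rwa [if_neg zero_ne_one, hproj₀] at hproj₁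

end Decomposition

section Algebra

variable {K : Type u} [Field K]
variable {A A' : Type*} [Ring A] [Algebra K A] [Ring A'] [Algebra K A']
variable {C D E : Type*} [Ring C] [Algebra K C] [Ring D] [Algebra K D] [Ring E] [Algebra K E]
variable {𝒜 : ZMod 2 → Submodule K A} {𝒜' : ZMod 2 → Submodule K A'}
variable {𝒞 : ZMod 2 → Submodule K C} {𝒟 : ZMod 2 → Submodule K D} {ℰ : ZMod 2 → Submodule K E}

theorem IsZ2Grading.tensorProduct (h𝒜 : IsZ2Grading K 𝒜) (h𝒞 : IsZ2Grading K 𝒞) :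
    IsZ2Grading K (superTensorGrading K 𝒜 𝒞) := by
  refine ⟨h𝒜.1.tensorProduct h𝒞.1, ?_, fun k l s hs t ht => ?_⟩
  · exact tmul_mem_superTensorGrading (add_zero 0) h𝒜.2.1 h𝒞.2.1
  suffices h : superTensorGrading K 𝒜 𝒞 k ≤
      (superTensorGrading K 𝒜 𝒞 (k + l)).comap (LinearMap.mulRight K t) from h hs
  refine superTensorGrading_le fun i j hij a ha c hc => ?_
  suffices h : superTensorGrading K 𝒜 𝒞 l ≤
      (superTensorGrading K 𝒜 𝒞 (k + l)).comap (LinearMap.mulLeft K (a ⊗ₜ c)) from h ht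
  refine superTensorGrading_le fun i' j' hij' a' ha' c' hc' => ?_
  rw [Submodule.mem_comap, LinearMap.mulLeft_apply, Algebra.TensorProduct.tmul_mul_tmul]
  exact tmul_mem_superTensorGrading (by rw [add_add_add_comm, hij, hij'])
    (h𝒜.2.2 i i' a ha a' ha') (h𝒞.2.2 j j' c hc c' hc')

theorem isGradedHom_id : IsGradedHom K 𝒞 𝒞 (AlgHom.id K C) :=
  fun _ _ hc => hc

theorem IsGradedHom.comp {g : D →ₐ[K] E} {f : C →ₐ[K] D} (hg : IsGradedHom K 𝒟 ℰ g)
    (hf : IsGradedHom K 𝒞 𝒟 f) : IsGradedHom K 𝒞 ℰ (g.comp f) :=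
  fun k c hc => hg k (f c) (hf k c hc)

theorem IsGradedHom.tensorProductMap {g : A →ₐ[K] A'} {f : C →ₐ[K] D} (hg : IsGradedHom K 𝒜 𝒜' g)
    (hf : IsGradedHom K 𝒞 𝒟 f) :
    IsGradedHom K (superTensorGrading K 𝒜 𝒞) (superTensorGrading K 𝒜' 𝒟)
      (Algebra.TensorProduct.map g f) := by
  intro k
  suffices h : superTensorGrading K 𝒜 𝒞 k ≤ (superTensorGrading K 𝒜' 𝒟 k).comap
      (Algebra.TensorProduct.map g f).toLinearMap from h
  refine superTensorGrading_le fun i j hij a ha c hc => ?_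
  exact tmul_mem_superTensorGrading hij (hg i a ha) (hf j c hc)

theorem isGradedSubalgebra_equalizer (h𝒞 : IsZ2Decomp K 𝒞) (h𝒟 : IsZ2Decomp K 𝒟)
    {f g : C →ₐ[K] D} (hf : IsGradedHom K 𝒞 𝒟 f) (hg : IsGradedHom K 𝒞 𝒟 g) :
    IsGradedSubalgebra K 𝒞 (AlgHom.equalizer f g) := by
  have hker : Subalgebra.toSubmodule (AlgHom.equalizer f g) =
      LinearMap.ker (f.toLinearMap - g.toLinearMap) := by
    ext c
    exact sub_eq_zero.symm
  rw [IsGradedSubalgebra, hker]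
  exact h𝒞.isGradedSubmodule_ker h𝒟 fun k c hc => sub_mem (hf k c hc) (hg k c hc)

theorem isTwoSidedSubmodule_ker (f : C →ₐ[K] D) :
    IsTwoSidedSubmodule K (LinearMap.ker f.toLinearMap) := by
  intro a x hx
  have hx' : f x = 0 := hx
  constructor <;> simp [hx']

theorem isNilpotent_submodule_of_le {M N : Submodule K C} (hMN : M ≤ N) (hN : IsNilpotent N) :
    IsNilpotent M := by
  obtain ⟨n, hn⟩ := hN
  exact ⟨n, le_bot_iff.1 ((pow_le_pow_left' hMN n).trans_eq hn)⟩

theorem ker_tensorProductMap_id_le (A : Type*) [Ring A] [Algebra K A] {q : C →ₐ[K] D}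
    (hq : Function.Surjective q) :
    LinearMap.ker (Algebra.TensorProduct.map (AlgHom.id K A) q).toLinearMap ≤
      LinearMap.range (Algebra.TensorProduct.includeLeft : A →ₐ[K] A ⊗[K] C).toLinearMap *
        (LinearMap.ker q.toLinearMap).map
          (Algebra.TensorProduct.includeRight : C →ₐ[K] A ⊗[K] C).toLinearMap := by
  have hexact := lTensor_exact A q.toLinearMap.exact_subtype_ker_map hq
  change LinearMap.ker (q.toLinearMap.lTensor A) ≤ _
  rw [hexact.linearMap_ker_eq, LinearMap.lTensor, TensorProduct.range_map_eq_span_tmul,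
    Submodule.span_le]
  rintro _ ⟨a, n, rfl⟩
  have hmul : (LinearMap.id (R := K) a : A) ⊗ₜ[K] (n : C) = (a ⊗ₜ 1) * (1 ⊗ₜ (n : C)) := by simp
  exact hmul ▸ Submodule.mul_mem_mul ⟨a, rfl⟩ ⟨n, n.2, rfl⟩

theorem isNilpotent_ker_tensorProductMap_id (A : Type*) [Ring A] [Algebra K A] {q : C →ₐ[K] D}
    (hq : Function.Surjective q) (hnil : IsNilpotent (LinearMap.ker q.toLinearMap)) :
    IsNilpotent
      (LinearMap.ker (Algebra.TensorProduct.map (AlgHom.id K A) q).toLinearMap) := by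
  refine isNilpotent_submodule_of_le (ker_tensorProductMap_id_le A hq)
    (Commute.isNilpotent_mul_left (Submodule.mul_comm_of_commute ?_) ?_)
  · rintro _ ⟨a, rfl⟩ _ ⟨c, -, rfl⟩
    simp [commute_iff_eq]
  · exact hnil.map (Submodule.mapHom (Algebra.TensorProduct.includeRight : C →ₐ[K] A ⊗[K] C))

end Algebra

section Quotient

variable {K : Type u} [Field K] {C : Type u} [Ring C] [Algebra K C]
variable {𝒞 : ZMod 2 → Submodule K C} {N : Submodule K C}

theorem isNilpotentSubmodule_iff_isNilpotent : IsNilpotentSubmodule K N ↔ IsNilpotent N := by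
  have hpow (s : ℕ) : N ^ s = 0 ↔
      ∀ x : Fin s → C, (∀ i, x i ∈ N) → (List.ofFn x).prod = 0 := by
    rw [Submodule.pow_eq_span_pow_set, Submodule.zero_eq_bot, Submodule.span_eq_bot]
    simp only [Set.mem_pow]
    exact ⟨fun h x hx => h _ ⟨fun i => ⟨x i, hx i⟩, rfl⟩,
      fun h _ ⟨x, hx⟩ => hx ▸ h _ fun i => (x i).2⟩
  simp only [IsNilpotentSubmodule, ← hpow]
  exact ⟨fun ⟨s, _, hs⟩ => ⟨s, hs⟩,
    fun ⟨s, hs⟩ => ⟨s + 1, s.succ_pos, by rw [pow_succ, hs, zero_mul]⟩⟩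

theorem ker_mkAlgHom_idealRel (hN : IsTwoSidedSubmodule K N) :
    LinearMap.ker (RingQuot.mkAlgHom K (idealRel K N)).toLinearMap = N := by
  let I : TwoSidedIdeal C := .mk' N N.zero_mem N.add_mem N.neg_mem
    (fun {x y} hy => (hN x y hy).1) (fun {x y} hx => (hN y x hx).2)
  have hI {c : C} : I.ringCon.mk' c = 0 ↔ c ∈ N := by
    rw [← TwoSidedIdeal.mem_ker, TwoSidedIdeal.ker_ringCon_mk']
    exact TwoSidedIdeal.mem_mk' ..
  have hrel ⦃x y : C⦄ (hxy : idealRel K N x y) : I.ringCon.mk' x = I.ringCon.mk' y := by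
    rw [← sub_eq_zero, ← map_sub]
    exact hI.2 hxy
  ext c
  constructor
  · intro hc
    have hc' : RingQuot.mkRingHom (idealRel K N) c = 0 := by
      rw [← RingQuot.mkAlgHom_coe K]; exact hc
    rw [← hI, ← RingQuot.lift_mkRingHom_apply I.ringCon.mk' hrel, hc', map_zero]
  · intro hc
    have hc' : idealRel K N c 0 := by rwa [idealRel, sub_zero]
    exact (RingQuot.mkAlgHom_rel K hc').trans (map_zero _)

theorem isGradedHom_mkAlgHom :
    IsGradedHom K 𝒞 (quotGrading K 𝒞 N) (RingQuot.mkAlgHom K (idealRel K N)) :=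
  fun _ _ hc => Submodule.mem_map_of_mem hc

theorem IsZ2Decomp.quotGrading (h𝒞 : IsZ2Decomp K 𝒞) (hN : IsTwoSidedSubmodule K N)
    (hgr : IsGradedSubmodule K 𝒞 N) : IsZ2Decomp K (quotGrading K 𝒞 N) :=
  h𝒞.map (RingQuot.mkAlgHom_surjective K _) ((ker_mkAlgHom_idealRel hN).symm ▸ hgr)

theorem map_eq_of_idealRel_ker {D : Type*} [Ring D] [Algebra K D] (f : C →ₐ[K] D) ⦃x y : C⦄
    (hxy : idealRel K (LinearMap.ker f.toLinearMap) x y) : f x = f y :=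
  LinearMap.sub_mem_ker_iff.1 hxy

/-- The first isomorphism theorem, for the quotient by the kernel realized as a `RingQuot`. -/
noncomputable def quotKerEquivOfSurjective {D : Type*} [Ring D] [Algebra K D] (f : C →ₐ[K] D)
    (hf : Function.Surjective f) :
    RingQuot (idealRel K (LinearMap.ker f.toLinearMap)) ≃ₐ[K] D :=
  AlgEquiv.ofBijective (RingQuot.liftAlgHom K ⟨f, map_eq_of_idealRel_ker f⟩) <| by
    constructor
    · rw [injective_iff_map_eq_zero]
      intro y hy
      obtain ⟨c, rfl⟩ := RingQuot.mkAlgHom_surjective K _ y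
      rw [RingQuot.liftAlgHom_mkAlgHom_apply] at hy
      exact (ker_mkAlgHom_idealRel (isTwoSidedSubmodule_ker f)).ge hy
    · intro d
      obtain ⟨c, rfl⟩ := hf d
      exact ⟨_, RingQuot.liftAlgHom_mkAlgHom_apply K f _ c⟩

theorem quotKerEquivOfSurjective_mkAlgHom {D : Type*} [Ring D] [Algebra K D] (f : C →ₐ[K] D)
    (hf : Function.Surjective f) (c : C) :
    quotKerEquivOfSurjective f hf (RingQuot.mkAlgHom K _ c) = f c :=
  RingQuot.liftAlgHom_mkAlgHom_apply K f _ c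

end Quotient

/-- Formal smoothness of a ℤ₂-graded algebra among all ℤ₂-graded algebras. -/
def IsGradedFormallySmooth (K : Type u) [Field K] {B : Type u} [Ring B] [Algebra K B]
    (ℬ : ZMod 2 → Submodule K B) : Prop :=
  ∀ (U : Type u) [Ring U] [Algebra K U],
    ∀ 𝒰 : ZMod 2 → Submodule K U, IsZ2Grading K 𝒰 →
    ∀ N : Submodule K U, IsTwoSidedSubmodule K N → IsGradedSubmodule K 𝒰 N →
      IsNilpotentSubmodule K N →
    ∀ f : B →ₐ[K] RingQuot (idealRel K N),
      IsGradedHom K ℬ (quotGrading K 𝒰 N) f →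
      ∃ f' : B →ₐ[K] U, IsGradedHom K ℬ 𝒰 f' ∧
        (RingQuot.mkAlgHom K (idealRel K N)).comp f' = f

/-- Formal smoothness of a supercommutative algebra among supercommutative algebras. -/
def SuperAlg.IsFormallySmooth {K : Type u} [Field K] (Ξ : SuperAlg K) : Prop :=
  ∀ (C : SuperAlg K) (N : Submodule K C.carrier),
    IsTwoSidedSubmodule K N → IsGradedSubmodule K C.grading N →
    IsNilpotentSubmodule K N →
    ∀ γ : Ξ.carrier →ₐ[K] RingQuot (idealRel K N),
      IsGradedHom K Ξ.grading (quotGrading K C.grading N) γ →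
      ∃ η : Ξ.carrier →ₐ[K] C.carrier,
        IsGradedHom K Ξ.grading C.grading η ∧
        (RingQuot.mkAlgHom K (idealRel K N)).comp η = γ

theorem IsGradedFormallySmooth.exists_lift_of_surjective {K : Type u} [Field K]
    {B U V : Type u} [Ring B] [Algebra K B] [Ring U] [Algebra K U] [Ring V] [Algebra K V]
    {ℬ : ZMod 2 → Submodule K B} {𝒰 : ZMod 2 → Submodule K U} {𝒱 : ZMod 2 → Submodule K V}
    (hℬ : IsGradedFormallySmooth K ℬ) (h𝒰 : IsZ2Grading K 𝒰) (h𝒱 : IsZ2Decomp K 𝒱)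
    {q : U →ₐ[K] V} (hq : IsGradedHom K 𝒰 𝒱 q) (hsurj : Function.Surjective q)
    (hnil : IsNilpotent (LinearMap.ker q.toLinearMap))
    {f : B →ₐ[K] V} (hf : IsGradedHom K ℬ 𝒱 f) :
    ∃ f' : B →ₐ[K] U, IsGradedHom K ℬ 𝒰 f' ∧ q.comp f' = f := by
  let e := quotKerEquivOfSurjective q hsurj
  have he (u : U) : e.symm (q u) = RingQuot.mkAlgHom K _ u := by
    rw [AlgEquiv.symm_apply_eq, quotKerEquivOfSurjective_mkAlgHom]
  have hef : IsGradedHom K ℬ (quotGrading K 𝒰 (LinearMap.ker q.toLinearMap))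
      ((e.symm : V →ₐ[K] _).comp f) := by
    intro k b hb
    obtain ⟨u, hu, huf⟩ := h𝒰.1.exists_map_eq_of_surjective (f := q.toLinearMap) h𝒱 hq hsurj
      (hf k b hb)
    exact ⟨u, hu, (he u).symm.trans (congrArg e.symm huf)⟩
  obtain ⟨f', hf', hef'⟩ := hℬ U 𝒰 h𝒰 _ (isTwoSidedSubmodule_ker q)
    (h𝒰.1.isGradedSubmodule_ker h𝒱 hq) (isNilpotentSubmodule_iff_isNilpotent.2 hnil) _ hef
  refine ⟨f', hf', AlgHom.ext fun b => e.symm.injective ?_⟩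
  exact (he (f' b)).trans (AlgHom.congr_fun hef' b)

theorem IsUniversalSupermap.algHom_ext {K A B D : Type u} [Field K] [Ring A] [Algebra K A]
    [Ring B] [Algebra K B] [Ring D] [Algebra K D] {𝒜 : ZMod 2 → Submodule K A}
    {ℬ : ZMod 2 → Submodule K B} {𝒟 : ZMod 2 → Submodule K D} {Ξ : SuperAlg K}
    {ρ : B →ₐ[K] A ⊗[K] Ξ.carrier} (hU : IsUniversalSupermap K 𝒜 ℬ Ξ ρ) (h𝒟 : IsZ2Decomp K 𝒟)
    {f g : Ξ.carrier →ₐ[K] D} (hf : IsGradedHom K Ξ.grading 𝒟 f)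
    (hg : IsGradedHom K Ξ.grading 𝒟 g)
    (hfg : (Algebra.TensorProduct.map (AlgHom.id K A) f).comp ρ =
      (Algebra.TensorProduct.map (AlgHom.id K A) g).comp ρ) : f = g := by
  have hmaps : MapsIntoTensorSub K ρ (AlgHom.equalizer f g) := by
    intro b
    have hb : ρ b ∈ LinearMap.eqLocus (AlgebraTensorModule.lTensor K A f.toLinearMap)
        (AlgebraTensorModule.lTensor K A g.toLinearMap) := AlgHom.congr_fun hfg b
    rw [Module.Flat.eqLocus_lTensor_eq] at hb
    exact hb
  exact AlgHom.equalizer_eq_top.1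
    (hU.2.1 _ (isGradedSubalgebra_equalizer Ξ.isGrading.1 h𝒟 hf hg) hmaps)

theorem universal_supermap_formally_smooth_general {K A B : Type u} [Field K]
    [Ring A] [Algebra K A] (𝒜 : ZMod 2 → Submodule K A) (h𝒜 : IsZ2Grading K 𝒜)
    [Ring B] [Algebra K B] (ℬ : ZMod 2 → Submodule K B) (_hℬ : IsZ2Grading K ℬ)
    (Ξ : SuperAlg K) (ρ : B →ₐ[K] A ⊗[K] Ξ.carrier) (hU : IsUniversalSupermap K 𝒜 ℬ Ξ ρ)
    (hBsmooth : IsGradedFormallySmooth K ℬ) : Ξ.IsFormallySmooth := by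
  intro C N hN hgr hnil γ hγ
  let π := RingQuot.mkAlgHom K (idealRel K N)
  have hπ : IsGradedHom K C.grading (quotGrading K C.grading N) π := isGradedHom_mkAlgHom
  have hπ_surj : Function.Surjective π := RingQuot.mkAlgHom_surjective K _
  have hquot : IsZ2Decomp K (quotGrading K C.grading N) := C.isGrading.1.quotGrading hN hgr
  have hker : IsNilpotent (LinearMap.ker π.toLinearMap) := by
    rwa [ker_mkAlgHom_idealRel hN, ← isNilpotentSubmodule_iff_isNilpotent]
  obtain ⟨κ, hκ, hπκ⟩ := hBsmooth.exists_lift_of_surjective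
    (h𝒜.tensorProduct C.isGrading) (h𝒜.1.tensorProduct hquot)
    (isGradedHom_id.tensorProductMap hπ)
    (TensorProduct.map_surjective Function.surjective_id hπ_surj)
    (isNilpotent_ker_tensorProductMap_id A hπ_surj hker)
    ((isGradedHom_id.tensorProductMap hγ).comp hU.1)
  obtain ⟨η, hη, hηρ⟩ := hU.2.2 C κ hκ
  refine ⟨η, hη, hU.algHom_ext hquot (hπ.comp hη) hγ ?_⟩
  rw [← hπκ, ← hηρ, ← AlgHom.comp_assoc, ← Algebra.TensorProduct.map_comp, AlgHom.id_comp]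

/-- If `(Ξ, ρ)` is an `A`-universal supermap for `B` and `B` is formally
smooth (graded maps into quotients by graded nilpotent ideals of ℤ₂-graded algebras lift),
then `Ξ` is formally smooth as a supercommutative algebra. -/
theorem universal_supermap_formally_smooth
    {K : Type u} [Field K] [CharZero K]
    {A : Type u} [Ring A] [Algebra K A] [FiniteDimensional K A]
    (𝒜 : ZMod 2 → Submodule K A) (h𝒜 : IsZ2Grading K 𝒜)
    {B : Type u} [Ring B] [Algebra K B]
    (ℬ : ZMod 2 → Submodule K B) (hℬ : IsZ2Grading K ℬ)
    (Ξ : SuperAlg K) (ρ : B →ₐ[K] A ⊗[K] Ξ.carrier)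
    (hU : IsUniversalSupermap K 𝒜 ℬ Ξ ρ)
    (hBsmooth : ∀ (U : Type u) [Ring U] [Algebra K U],
      ∀ 𝒰 : ZMod 2 → Submodule K U, IsZ2Grading K 𝒰 →
      ∀ N : Submodule K U, IsTwoSidedSubmodule K N → IsGradedSubmodule K 𝒰 N →
        IsNilpotentSubmodule K N →
      ∀ f : B →ₐ[K] RingQuot (idealRel K N),
        IsGradedHom K ℬ (quotGrading K 𝒰 N) f →
        ∃ f' : B →ₐ[K] U, IsGradedHom K ℬ 𝒰 f' ∧
          (RingQuot.mkAlgHom K (idealRel K N)).comp f' = f) :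
    ∀ (C : SuperAlg K) (N : Submodule K C.carrier),
      IsTwoSidedSubmodule K N → IsGradedSubmodule K C.grading N →
      IsNilpotentSubmodule K N →
      ∀ γ : Ξ.carrier →ₐ[K] RingQuot (idealRel K N),
        IsGradedHom K Ξ.grading (quotGrading K C.grading N) γ →
        ∃ η : Ξ.carrier →ₐ[K] C.carrier,
          IsGradedHom K Ξ.grading C.grading η ∧
          (RingQuot.mkAlgHom K (idealRel K N)).comp η = γ :=
  universal_supermap_formally_smooth_general 𝒜 h𝒜 ℬ hℬ Ξ ρ hU hBsmooth
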